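/- Let S = {x_1, …, x_n} be a finite family of ranking vectors from X_m, let ε ≥ 0, and let S̄_1, …, S̄_k be a partition of S that is ε-optimal for the k-means clustering problem, i.e., v_KMC(S̄_1, …, S̄_k) ≤ (1 + ε) v_KMC*, where v_KMC* is the minimum KMC objective over all partitions of S into at most k nonempty clusters. Then this partition is (1 + 2ε)-optimal for the ranking clustering problem: v_KRC(S̄_1, …, S̄_k) ≤ (2 + 2ε) v_KRC*, where v_KRC* is the minimum KRC objective over the same partitions. -/

import Mathlib

/-- A ranking vector of dimension `m`: its entries are a permutation of `1, 2, …, m`. -/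
def IsRankingVector {m : ℕ} (x : Fin m → ℝ) : Prop :=
  ∃ σ : Equiv.Perm (Fin m), ∀ i, x i = ((σ i : ℕ) : ℝ) + 1

/-- The KMC objective of a partition (given by the assignment `c`), with optimally
chosen (mean) centroids. -/
noncomputable def vKMC {n m k : ℕ} (p : Fin n → Fin m → ℝ) (c : Fin n → Fin k) : ℝ :=
  ∑ ℓ, ∑ i ∈ Finset.univ.filter (fun i => c i = ℓ), ∑ j,
    (p i j - (∑ i' ∈ Finset.univ.filter (fun i' => c i' = ℓ), p i' j) /
      ((Finset.univ.filter (fun i' => c i' = ℓ)).card : ℝ)) ^ 2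

/-- The KRC objective of a partition (given by the assignment `c`), with optimally
chosen ranking-vector centroids. -/
noncomputable def vKRC {n m k : ℕ} (p : Fin n → Fin m → ℝ) (c : Fin n → Fin k) : ℝ :=
  ∑ ℓ, sInf {v : ℝ | ∃ y : Fin m → ℝ, IsRankingVector y ∧
    v = ∑ i ∈ Finset.univ.filter (fun i => c i = ℓ), ∑ j, (p i j - y j) ^ 2}


lemma oneD_exp {ι : Type*} (s : Finset ι) (f : ι → ℝ) (t : ℝ) :
    ∑ i ∈ s, (f i - t) ^ 2 = ∑ i ∈ s, f i ^ 2 - 2 * t * ∑ i ∈ s, f i + s.card * t ^ 2 := by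
  have h : ∀ i ∈ s, (f i - t) ^ 2 = f i ^ 2 - 2 * t * f i + t ^ 2 := fun i _ => by ring
  rw [Finset.sum_congr rfl h, Finset.sum_add_distrib, Finset.sum_sub_distrib, ← Finset.mul_sum]
  simp

lemma oneD_min {ι : Type*} (s : Finset ι) (f : ι → ℝ) (t : ℝ) :
    ∑ i ∈ s, (f i - (∑ i' ∈ s, f i') / (s.card : ℝ)) ^ 2 ≤ ∑ i ∈ s, (f i - t) ^ 2 := by
  rcases s.eq_empty_or_nonempty with rfl | hs
  · simp
  have hN : (0 : ℝ) < s.card := by exact_mod_cast hs.card_pos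
  rw [oneD_exp, oneD_exp]
  generalize (∑ i ∈ s, f i) = S
  generalize (s.card : ℝ) = N at *
  obtain ⟨u, rfl⟩ : ∃ u, S = N * u := ⟨S / N, by field_simp⟩
  rw [mul_div_cancel_left₀ _ hN.ne']
  nlinarith [mul_nonneg hN.le (sq_nonneg (u - t))]

lemma oneD_pair {ι : Type*} (s : Finset ι) (f : ι → ℝ) :
    ∑ a ∈ s, ∑ i ∈ s, (f i - f a) ^ 2 =
      s.card * (2 * ∑ i ∈ s, (f i - (∑ i' ∈ s, f i') / (s.card : ℝ)) ^ 2) := by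
  rcases s.eq_empty_or_nonempty with rfl | hs
  · simp
  have hN : (0 : ℝ) < s.card := by exact_mod_cast hs.card_pos
  have h : ∀ a ∈ s, ∑ i ∈ s, (f i - f a) ^ 2 =
      ∑ i ∈ s, f i ^ 2 - (2 * ∑ i ∈ s, f i) * f a + s.card * f a ^ 2 := fun a _ => by
    rw [oneD_exp]; ring
  rw [Finset.sum_congr rfl h, Finset.sum_add_distrib, Finset.sum_sub_distrib, ← Finset.mul_sum,
    ← Finset.mul_sum, oneD_exp, Finset.sum_const, nsmul_eq_mul]
  field_simp
  ring

lemma krc_bdd {n m : ℕ} (p : Fin n → Fin m → ℝ) (s : Finset (Fin n)) :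
    BddBelow {v : ℝ | ∃ y : Fin m → ℝ, IsRankingVector y ∧
      v = ∑ i ∈ s, ∑ j, (p i j - y j) ^ 2} := by
  refine ⟨0, ?_⟩
  rintro v ⟨y, _, rfl⟩
  positivity

lemma id_ranking (m : ℕ) : IsRankingVector (fun j : Fin m => ((j : ℕ) : ℝ) + 1) :=
  ⟨Equiv.refl _, fun _ => rfl⟩

lemma kmc_le_krc {n m k : ℕ} (p : Fin n → Fin m → ℝ) (c : Fin n → Fin k) :
    vKMC p c ≤ vKRC p c := by
  unfold vKMC vKRC
  refine Finset.sum_le_sum fun ℓ _ => ?_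
  refine le_csInf ⟨_, _, id_ranking m, rfl⟩ ?_
  rintro v ⟨y, _, rfl⟩
  rw [Finset.sum_comm, Finset.sum_comm (t := Finset.univ)]
  exact Finset.sum_le_sum fun j _ => oneD_min _ (fun i => p i j) (y j)

lemma krc_le_kmc {n m k : ℕ} (p : Fin n → Fin m → ℝ) (hp : ∀ i, IsRankingVector (p i))
    (c : Fin n → Fin k) : vKRC p c ≤ 2 * vKMC p c := by
  unfold vKMC vKRC
  rw [Finset.mul_sum]
  refine Finset.sum_le_sum fun ℓ _ => ?_
  generalize Finset.univ.filter (fun i => c i = ℓ) = s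
  rcases s.eq_empty_or_nonempty with rfl | hs
  · exact (csInf_le (krc_bdd p ∅) ⟨_, id_ranking m, rfl⟩).trans (by simp)
  · have key : ∑ a ∈ s, ∑ i ∈ s, ∑ j, (p i j - p a j) ^ 2 =
        s.card * (2 * ∑ i ∈ s, ∑ j, (p i j - (∑ i' ∈ s, p i' j) / (s.card : ℝ)) ^ 2) := by
      rw [Finset.sum_comm (s := s) (t := Finset.univ), Finset.mul_sum, Finset.mul_sum,
        ← Finset.sum_congr rfl (fun j _ => oneD_pair s (fun i => p i j)), Finset.sum_comm]
      refine (Finset.sum_congr rfl fun a _ => Finset.sum_comm).trans ?_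
      rw [Finset.sum_comm]
      refine Finset.sum_congr rfl fun j _ => Finset.sum_comm
    obtain ⟨a, ha, hle⟩ := Finset.exists_le_of_sum_le hs
      (f := fun a => ∑ i ∈ s, ∑ j, (p i j - p a j) ^ 2)
      (g := fun _ => 2 * ∑ i ∈ s, ∑ j, (p i j - (∑ i' ∈ s, p i' j) / (s.card : ℝ)) ^ 2)
      (by rw [key, Finset.sum_const, nsmul_eq_mul])
    exact (csInf_le (krc_bdd p s) ⟨_, hp a, rfl⟩).trans hle

theorem stmt6 (n m k : ℕ) (hk : 1 ≤ k) (ε : ℝ) (hε : 0 ≤ ε)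
    (p : Fin n → Fin m → ℝ) (hp : ∀ i, IsRankingVector (p i))
    (cbar : Fin n → Fin k)
    (hopt : vKMC p cbar ≤ (1 + ε) * sInf (Set.range fun c : Fin n → Fin k => vKMC p c)) :
    vKRC p cbar ≤ (2 + 2 * ε) * sInf (Set.range fun c : Fin n → Fin k => vKRC p c) := by
  have hinf : sInf (Set.range fun c : Fin n → Fin k => vKMC p c) ≤
      sInf (Set.range fun c : Fin n → Fin k => vKRC p c) := by
    refine le_csInf ⟨_, cbar, rfl⟩ ?_
    rintro _ ⟨c, rfl⟩
    exact (csInf_le (Set.finite_range _).bddBelow ⟨c, rfl⟩).trans (kmc_le_krc p c)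
  have h1 := krc_le_kmc p hp cbar
  have h2 := mul_le_mul_of_nonneg_left hinf (by linarith : (0 : ℝ) ≤ 1 + ε)
  linarith
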